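/- The spaces U3(F2) and V3(F2) are primitive linear subspaces of the 3×3 matrices over F2 with upper rank 2, and every nonzero matrix of U3(F2) and every nonzero matrix of V3(F2) has rank 2. -/

import Mathlib

/-!
*Rank.* A zero-diagonal `3 × 3` matrix has determinant `xyz + uvw`, where `x, y, z` and `u, v, w`
are its entries along the two `3`-cycles. In `V3` both triples sum to zero, so both products vanish
over `F2`. If the rank were at most one, the `2 × 2` minors would make the products `xy`, `yz`, `zx`
vanish as well, so `x² = x(x + y + z) = 0`, and likewise for the other entries.

*Primitivity.* Deleting the last column of `P * M * Q` restricts `M` to the hyperplane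
`φ ⬝ᵥ y = 0`, where `φ` is the last row of `Q⁻¹`, so the rank survives when the kernel of `M` is a
line outside that hyperplane. Every line of `F2³` is the kernel of some matrix of `U3`, hence every
plane is avoided by the kernel of a matrix of `U3 ≤ V3`. Rows follow by transposition, because `U3`
is stable under it: `(a, b, c)` becomes `(a, c, b)`.
-/

open Matrix

/-- Two linear subspaces of `n × p` matrices over `K` are *equivalent* when one is obtained
from the other by multiplying on the left and on the right by fixed invertible matrices. -/
def MatEquiv (K : Type*) [Field K] {n p : ℕ}
    (V₁ V₂ : Submodule K (Matrix (Fin n) (Fin p) K)) : Prop :=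
  ∃ (P : Matrix (Fin n) (Fin n) K) (Q : Matrix (Fin p) (Fin p) K),
    IsUnit P ∧ IsUnit Q ∧
      (V₂ : Set (Matrix (Fin n) (Fin p) K)) =
        (fun M => P * M * Q) '' (V₁ : Set (Matrix (Fin n) (Fin p) K))

/-- A linear subspace of matrices is *reduced* when no nonzero vector is annihilated by every
matrix of the space, and the column spaces of the matrices of the space together span the
whole target space. -/
def Reduced (K : Type*) [Field K] {n p : ℕ}
    (V : Submodule K (Matrix (Fin n) (Fin p) K)) : Prop :=
  (∀ x : Fin p → K, (∀ M ∈ V, M.mulVec x = 0) → x = 0) ∧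
  Submodule.span K {y : Fin n → K | ∃ M ∈ V, ∃ x : Fin p → K, M.mulVec x = y} = ⊤

/-- The *upper rank* of a linear subspace of matrices: the maximal rank of a matrix in it. -/
noncomputable def urk {K : Type*} [Field K] {n p : ℕ}
    (V : Submodule K (Matrix (Fin n) (Fin p) K)) : ℕ :=
  sSup (Matrix.rank '' (V : Set (Matrix (Fin n) (Fin p) K)))

/-- The matrix obtained by deleting the last column. -/
def dropCol {K : Type*} [Field K] {n p : ℕ} (M : Matrix (Fin n) (Fin p) K) :
    Matrix (Fin n) (Fin (p - 1)) K :=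
  M.submatrix id (Fin.castLE (Nat.sub_le p 1))

/-- The matrix obtained by deleting the last row. -/
def dropRow {K : Type*} [Field K] {n p : ℕ} (M : Matrix (Fin n) (Fin p) K) :
    Matrix (Fin (n - 1)) (Fin p) K :=
  M.submatrix (Fin.castLE (Nat.sub_le n 1)) id

/-- A linear subspace of matrices (of upper rank `r = urk V`) is *semi-primitive* when it is
reduced and it is not equivalent to a subspace `T` such that the space obtained by deleting
the last column of each matrix of `T` has upper rank at most `r - 1`. -/
def SemiPrimitive (K : Type*) [Field K] {n p : ℕ}
    (V : Submodule K (Matrix (Fin n) (Fin p) K)) : Prop :=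
  Reduced K V ∧
    ¬ ∃ T : Submodule K (Matrix (Fin n) (Fin p) K),
        MatEquiv K V T ∧ ∀ M ∈ T, (dropCol M).rank ≤ urk V - 1

/-- A linear subspace of matrices (of upper rank `r = urk V`) is *primitive* when it is
semi-primitive and it is not equivalent to a subspace `T` such that the space obtained by
deleting the last row of each matrix of `T` has upper rank at most `r - 1`. -/
def Primitive (K : Type*) [Field K] {n p : ℕ}
    (V : Submodule K (Matrix (Fin n) (Fin p) K)) : Prop :=
  SemiPrimitive K V ∧
    ¬ ∃ T : Submodule K (Matrix (Fin n) (Fin p) K),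
        MatEquiv K V T ∧ ∀ M ∈ T, (dropRow M).rank ≤ urk V - 1

/-- `U3(F2)`: the matrices `!![0, a, a+c; a, 0, b; a+b, c, 0]` with `a, b, c ∈ F2`. -/
def U3 : Submodule (ZMod 2) (Matrix (Fin 3) (Fin 3) (ZMod 2)) where
  carrier := {M | ∃ a b c : ZMod 2, M = !![0, a, a + c; a, 0, b; a + b, c, 0]}
  add_mem' := by
    rintro M N ⟨a, b, c, rfl⟩ ⟨a', b', c', rfl⟩
    exact ⟨a + a', b + b', c + c', by revert a b c a' b' c'; decide⟩
  zero_mem' := ⟨0, 0, 0, by decide⟩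
  smul_mem' := by
    rintro k M ⟨a, b, c, rfl⟩
    exact ⟨k * a, k * b, k * c, by revert k a b c; decide⟩

/-- `V3(F2)`: the `3 × 3` matrices over `F2` with zero diagonal satisfying
`M 0 1 + M 1 2 + M 2 0 = 0` and `M 2 1 + M 1 0 + M 0 2 = 0`. -/
def V3 : Submodule (ZMod 2) (Matrix (Fin 3) (Fin 3) (ZMod 2)) where
  carrier := {M | (∀ i : Fin 3, M i i = 0) ∧
    M 0 1 + M 1 2 + M 2 0 = 0 ∧ M 2 1 + M 1 0 + M 0 2 = 0}
  add_mem' := by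
    rintro M N ⟨hM1, hM2, hM3⟩ ⟨hN1, hN2, hN3⟩
    refine ⟨fun i => by simp [Matrix.add_apply, hM1 i, hN1 i], ?_, ?_⟩
    · simp only [Matrix.add_apply]
      linear_combination hM2 + hN2
    · simp only [Matrix.add_apply]
      linear_combination hM3 + hN3
  zero_mem' := by
    refine ⟨fun i => rfl, ?_, ?_⟩ <;> simp
  smul_mem' := by
    rintro c M ⟨hM1, hM2, hM3⟩
    refine ⟨fun i => by simp [Matrix.smul_apply, hM1 i], ?_, ?_⟩
    · simp only [Matrix.smul_apply, smul_eq_mul]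
      linear_combination c * hM2
    · simp only [Matrix.smul_apply, smul_eq_mul]
      linear_combination c * hM3

section Rank

variable {K : Type*} [Field K] {m n : Type*} [Fintype n]

theorem rank_lt_card_of_det_eq_zero [DecidableEq n] {M : Matrix n n K} (h : M.det = 0) :
    M.rank < Fintype.card n := by
  refine M.rank_le_card_width.lt_of_ne fun hrank => ?_
  have hsurj : Function.Surjective M.mulVecLin :=
    LinearMap.range_eq_top.1 (Submodule.eq_top_of_finrank_eq (hrank.trans (by simp)))
  have hunit : IsUnit M.det :=
    (Matrix.isUnit_iff_isUnit_det M).1 (Matrix.mulVec_surjective_iff_isUnit.1 hsurj)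
  exact hunit.ne_zero h

theorem two_le_rank_of_minor_ne_zero {M : Matrix m n K} {i i' : m} {j j' : n}
    (h : M i j * M i' j' - M i j' * M i' j ≠ 0) : 2 ≤ M.rank := by
  have hminor : (M.submatrix ![i, i'] ![j, j']).rank = 2 := by
    rw [rank_of_det_ne_zero (by rwa [det_fin_two]), Fintype.card_fin]
  exact hminor ▸ M.rank_submatrix_le ![i, i'] ![j, j']

theorem eq_zero_of_mulVec_eq_zero_of_dotProduct_eq_zero {M : Matrix m n K}
    (hrank : M.rank + 1 = Fintype.card n) {φ y : n → K} (hy : M *ᵥ y = 0) (hφy : φ ⬝ᵥ y ≠ 0)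
    {x : n → K} (hx : M *ᵥ x = 0) (hφx : φ ⬝ᵥ x = 0) : x = 0 := by
  have hker : Module.finrank K (LinearMap.ker M.mulVecLin) = 1 := by
    have := M.mulVecLin.finrank_range_add_finrank_ker
    rw [Module.finrank_fintype_fun_eq_card, ← hrank] at this
    exact Nat.add_left_cancel this
  have hy0 : (⟨y, hy⟩ : LinearMap.ker M.mulVecLin) ≠ 0 := by
    intro h
    exact hφy (by rw [show y = 0 from congrArg Subtype.val h, dotProduct_zero])
  obtain ⟨c, hc⟩ := (finrank_eq_one_iff_of_nonzero' _ hy0).1 hker ⟨x, hx⟩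
  obtain rfl : c • y = x := congrArg Subtype.val hc
  have hc0 : c = 0 := by simpa [hφy] using hφx
  rw [hc0, zero_smul]

end Rank

section MatrixSpaces

variable {K : Type*} [Field K] {n p : ℕ}

theorem urk_eq_of_forall_rank_eq {V : Submodule K (Matrix (Fin n) (Fin p) K)} {r : ℕ}
    (hV : V ≠ ⊥) (hr : ∀ M ∈ V, M ≠ 0 → M.rank = r) : urk V = r := by
  refine IsGreatest.csSup_eq ⟨?_, ?_⟩
  · obtain ⟨M, hM, hM0⟩ := V.ne_bot_iff.1 hV
    exact ⟨M, hM, hr M hM hM0⟩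
  · rintro _ ⟨M, hM, rfl⟩
    obtain rfl | hM0 := eq_or_ne M 0
    · simp
    · exact (hr M hM hM0).le

/-- The space of the transposes of the matrices of `V`, which exchanges the roles of rows and
columns. -/
def transposeSpace (V : Submodule K (Matrix (Fin n) (Fin p) K)) :
    Submodule K (Matrix (Fin p) (Fin n) K) :=
  V.map (transposeLinearEquiv (Fin n) (Fin p) K K).toLinearMap

theorem mem_transposeSpace {V : Submodule K (Matrix (Fin n) (Fin p) K)}
    {M : Matrix (Fin p) (Fin n) K} : M ∈ transposeSpace V ↔ Mᵀ ∈ V :=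
  Submodule.mem_map_equiv V

theorem transposeSpace_mono {V W : Submodule K (Matrix (Fin n) (Fin p) K)} (h : V ≤ W) :
    transposeSpace V ≤ transposeSpace W :=
  Submodule.map_mono h

theorem MatEquiv.transposeSpace {V T : Submodule K (Matrix (Fin n) (Fin p) K)}
    (h : MatEquiv K V T) : MatEquiv K (transposeSpace V) (transposeSpace T) := by
  obtain ⟨P, Q, hP, hQ, hT⟩ := h
  refine ⟨Qᵀ, Pᵀ, (isUnit_transpose Q).2 hQ, (isUnit_transpose P).2 hP, Set.ext fun N => ?_⟩
  have hN : Nᵀ ∈ T ↔ ∃ M ∈ V, P * M * Q = Nᵀ := Set.ext_iff.1 hT Nᵀ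
  rw [SetLike.mem_coe, mem_transposeSpace, hN]
  constructor
  · rintro ⟨M, hM, hMN⟩
    refine ⟨Mᵀ, mem_transposeSpace.2 hM, ?_⟩
    rw [← transpose_transpose N, ← hMN]
    simp only [transpose_mul, Matrix.mul_assoc]
  · rintro ⟨M, hM, rfl⟩
    refine ⟨Mᵀ, mem_transposeSpace.1 hM, ?_⟩
    simp only [transpose_mul, transpose_transpose, Matrix.mul_assoc]

theorem span_mulVec_eq_top {V : Submodule K (Matrix (Fin n) (Fin p) K)}
    (hV : ∀ φ : Fin n → K, (∀ M ∈ transposeSpace V, M *ᵥ φ = 0) → φ = 0) :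
    Submodule.span K {y : Fin n → K | ∃ M ∈ V, ∃ x : Fin p → K, M *ᵥ x = y} = ⊤ := by
  by_contra hspan
  obtain ⟨f, hf0, hf⟩ := Submodule.exists_le_ker_of_lt_top _ (lt_top_iff_ne_top.2 hspan)
  obtain ⟨φ, rfl⟩ := (dotProductEquiv K (Fin n)).surjective f
  refine hf0 ((map_eq_zero_iff _ (dotProductEquiv K (Fin n)).injective).2 (hV φ fun M hM => ?_))
  refine dotProduct_eq_zero _ fun x => ?_
  have hφM : φ ⬝ᵥ (Mᵀ *ᵥ x) = 0 :=
    hf (Submodule.subset_span ⟨Mᵀ, mem_transposeSpace.1 hM, x, rfl⟩)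
  rwa [dotProduct_mulVec, vecMul_transpose] at hφM

/-- Every hyperplane meets the kernel of some matrix of `V` trivially. Hyperplanes are encoded by
their normal vectors `φ` for the dot product. -/
def AvoidsHyperplanes (V : Submodule K (Matrix (Fin n) (Fin p) K)) : Prop :=
  ∀ φ : Fin p → K, φ ≠ 0 → ∃ M ∈ V, ∀ y, M *ᵥ y = 0 → φ ⬝ᵥ y = 0 → y = 0

theorem AvoidsHyperplanes.mono {V W : Submodule K (Matrix (Fin n) (Fin p) K)}
    (hV : AvoidsHyperplanes V) (h : V ≤ W) : AvoidsHyperplanes W := fun φ hφ =>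
  let ⟨M, hM, hMφ⟩ := hV φ hφ
  ⟨M, h hM, hMφ⟩

theorem avoidsHyperplanes_of_forall_exists_mulVec_eq_zero
    {V : Submodule K (Matrix (Fin n) (Fin (p + 1)) K)} (hrank : ∀ M ∈ V, M ≠ 0 → M.rank = p)
    (hker : ∀ y : Fin (p + 1) → K, y ≠ 0 → ∃ M ∈ V, M ≠ 0 ∧ M *ᵥ y = 0) :
    AvoidsHyperplanes V := by
  intro φ hφ
  obtain ⟨y, hφy⟩ : ∃ y, φ ⬝ᵥ y ≠ 0 := by
    by_contra! h
    exact hφ (dotProduct_eq_zero φ h)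
  obtain ⟨M, hM, hM0, hMy⟩ := hker y fun hy => hφy (hy ▸ dotProduct_zero φ)
  have hcard : M.rank + 1 = Fintype.card (Fin (p + 1)) := by simp [hrank M hM hM0]
  exact ⟨M, hM, fun x => eq_zero_of_mulVec_eq_zero_of_dotProduct_eq_zero hcard hMy hφy⟩

theorem AvoidsHyperplanes.eq_zero_of_forall_mulVec_eq_zero [Nontrivial (Fin p)]
    {V : Submodule K (Matrix (Fin n) (Fin p) K)} (hV : AvoidsHyperplanes V) {x : Fin p → K}
    (hx : ∀ M ∈ V, M *ᵥ x = 0) : x = 0 := by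
  obtain ⟨φ, hφ, hφx⟩ := exists_ne_zero_dotProduct_eq_zero x
  obtain ⟨M, hM, hMφ⟩ := hV φ hφ
  exact hMφ x (hx M hM) hφx

theorem AvoidsHyperplanes.reduced [Nontrivial (Fin n)] [Nontrivial (Fin p)]
    {V : Submodule K (Matrix (Fin n) (Fin p) K)} (hV : AvoidsHyperplanes V)
    (hV' : AvoidsHyperplanes (transposeSpace V)) : Reduced K V :=
  ⟨fun _ => hV.eq_zero_of_forall_mulVec_eq_zero,
    span_mulVec_eq_top fun _ => hV'.eq_zero_of_forall_mulVec_eq_zero⟩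

theorem dropCol_mulVec (M : Matrix (Fin n) (Fin (p + 1)) K) (z : Fin p → K) :
    dropCol M *ᵥ z = M *ᵥ (Fin.snoc z 0 : Fin (p + 1) → K) := by
  ext i
  simp only [mulVec, dotProduct, Fin.sum_univ_castSucc, Fin.snoc_castSucc, Fin.snoc_last, mul_zero,
    add_zero]
  rfl

theorem rank_dropCol_mul_mul {P : Matrix (Fin n) (Fin n) K} {M : Matrix (Fin n) (Fin (p + 1)) K}
    {Q : Matrix (Fin (p + 1)) (Fin (p + 1)) K} (hP : IsUnit P) (hQ : IsUnit Q)
    (hM : ∀ y, M *ᵥ y = 0 → Q⁻¹ (Fin.last p) ⬝ᵥ y = 0 → y = 0) :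
    (dropCol (P * M * Q)).rank = p := by
  have hinj : Function.Injective (dropCol (P * M * Q)).mulVecLin := by
    rw [← LinearMap.ker_eq_bot, LinearMap.ker_eq_bot']
    intro (z : Fin p → K) hz
    let y : Fin (p + 1) → K := Q *ᵥ Fin.snoc z 0
    have hQy : Q⁻¹ *ᵥ y = Fin.snoc z 0 := by
      rw [mulVec_mulVec, nonsing_inv_mul Q ((isUnit_iff_isUnit_det Q).1 hQ), one_mulVec]
    have hMy : M *ᵥ y = 0 := by
      refine mulVec_injective_of_isUnit hP ?_
      rw [mulVec_zero, mulVec_mulVec, mulVec_mulVec, ← dropCol_mulVec]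
      exact hz
    have hlast : Q⁻¹ (Fin.last p) ⬝ᵥ y = 0 :=
      (congrFun hQy (Fin.last p)).trans (Fin.snoc_last _ _)
    rw [hM y hMy hlast, mulVec_zero] at hQy
    ext i
    simpa using (congrFun hQy i.castSucc).symm
  exact (LinearMap.finrank_range_of_inj hinj).trans (by simp)

theorem AvoidsHyperplanes.exists_rank_dropCol_eq
    {V T : Submodule K (Matrix (Fin n) (Fin (p + 1)) K)} (hV : AvoidsHyperplanes V)
    (hVT : MatEquiv K V T) : ∃ N ∈ T, (dropCol N).rank = p := by
  obtain ⟨P, Q, hP, hQ, hT⟩ := hVT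
  have hrow : Q⁻¹ (Fin.last p) ≠ 0 := fun h =>
    ((isUnit_iff_isUnit_det _).1 (isUnit_nonsing_inv_iff.2 hQ)).ne_zero
      (det_eq_zero_of_row_eq_zero (Fin.last p) (congrFun h))
  obtain ⟨M, hM, hMφ⟩ := hV _ hrow
  have hPMQ : P * M * Q ∈ (T : Set (Matrix (Fin n) (Fin (p + 1)) K)) := hT ▸ ⟨M, hM, rfl⟩
  exact ⟨P * M * Q, hPMQ, rank_dropCol_mul_mul hP hQ hMφ⟩

theorem rank_dropRow (M : Matrix (Fin n) (Fin p) K) : (dropRow M).rank = (dropCol Mᵀ).rank :=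
  rank_transpose (dropCol Mᵀ)

theorem AvoidsHyperplanes.exists_rank_dropRow_eq
    {V T : Submodule K (Matrix (Fin (n + 1)) (Fin p) K)}
    (hV : AvoidsHyperplanes (transposeSpace V)) (hVT : MatEquiv K V T) :
    ∃ N ∈ T, (dropRow N).rank = n := by
  obtain ⟨N, hN, hrank⟩ := hV.exists_rank_dropCol_eq hVT.transposeSpace
  exact ⟨Nᵀ, mem_transposeSpace.1 hN, (rank_dropRow Nᵀ).trans hrank⟩

theorem AvoidsHyperplanes.primitive [NeZero n]
    {V : Submodule K (Matrix (Fin (n + 1)) (Fin (n + 1)) K)} (hV : AvoidsHyperplanes V)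
    (hV' : AvoidsHyperplanes (transposeSpace V)) (hurk : urk V = n) : Primitive K V := by
  have hn : n - 1 < n := Nat.sub_one_lt (NeZero.ne n)
  have : Nontrivial (Fin (n + 1)) := Fin.nontrivial_iff_two_le.2 (by lia)
  refine ⟨⟨hV.reduced hV', ?_⟩, ?_⟩ <;> rintro ⟨T, hVT, hT⟩ <;> rw [hurk] at hT
  · obtain ⟨N, hN, hrank⟩ := hV.exists_rank_dropCol_eq hVT
    exact hn.not_ge (hrank.symm.trans_le (hT N hN))
  · obtain ⟨N, hN, hrank⟩ := hV'.exists_rank_dropRow_eq hVT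
    exact hn.not_ge (hrank.symm.trans_le (hT N hN))

end MatrixSpaces

section ZeroDiagonal

theorem det_fin_three_of_diag_eq_zero {R : Type*} [CommRing R] {M : Matrix (Fin 3) (Fin 3) R}
    (hdiag : ∀ i, M i i = 0) :
    M.det = M 0 1 * M 1 2 * M 2 0 + M 2 1 * M 1 0 * M 0 2 := by
  rw [det_fin_three, hdiag 0, hdiag 1, hdiag 2]
  ring

theorem eq_zero_of_add_eq_zero_of_mul_eq_zero {R : Type*} [CommRing R] [IsReduced R] {x y z : R}
    (hsum : x + y + z = 0) (hxy : x * y = 0) (hzx : z * x = 0) : x = 0 := by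
  have hsq : x ^ 2 = 0 := by linear_combination x * hsum - hxy - hzx
  exact (pow_eq_zero_iff two_ne_zero).1 hsq

theorem two_le_rank_of_diag_eq_zero {K : Type*} [Field K] {M : Matrix (Fin 3) (Fin 3) K}
    (hdiag : ∀ i, M i i = 0) (hsum : M 0 1 + M 1 2 + M 2 0 = 0)
    (hsum' : M 2 1 + M 1 0 + M 0 2 = 0) (hM : M ≠ 0) : 2 ≤ M.rank := by
  contrapose! hM
  have hpath (i j k : Fin 3) : M i j * M j k = 0 := by
    have hminor : M i j * M j k - M i k * M j j = 0 := by
      by_contra h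
      exact hM.not_ge (two_le_rank_of_minor_ne_zero h)
    simpa [hdiag] using hminor
  have hcycle {i j k : Fin 3} (h : M i j + M j k + M k i = 0) : M i j = 0 :=
    eq_zero_of_add_eq_zero_of_mul_eq_zero h (hpath i j k) (hpath k i j)
  have h01 : M 0 1 = 0 := hcycle hsum
  have h12 : M 1 2 = 0 := hcycle (by rwa [add_rotate] at hsum)
  have h20 : M 2 0 = 0 := hcycle (by rwa [← add_rotate] at hsum)
  have h21 : M 2 1 = 0 := hcycle hsum'
  have h10 : M 1 0 = 0 := hcycle (by rwa [add_rotate] at hsum')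
  have h02 : M 0 2 = 0 := hcycle (by rwa [← add_rotate] at hsum')
  ext i j
  fin_cases i <;> fin_cases j <;> first | exact hdiag _ | assumption

end ZeroDiagonal

theorem zmod_two_mul_mul_eq_zero_of_add_eq_zero :
    ∀ {x y z : ZMod 2}, x + y + z = 0 → x * y * z = 0 := by
  decide

theorem rank_eq_two_of_mem_V3 {M : Matrix (Fin 3) (Fin 3) (ZMod 2)} (hM : M ∈ V3) (hM0 : M ≠ 0) :
    M.rank = 2 := by
  obtain ⟨hdiag, hsum, hsum'⟩ := hM
  have hdet : M.det = 0 := by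
    rw [det_fin_three_of_diag_eq_zero hdiag, zmod_two_mul_mul_eq_zero_of_add_eq_zero hsum,
      zmod_two_mul_mul_eq_zero_of_add_eq_zero hsum', add_zero]
  have hlt : M.rank < 3 := rank_lt_card_of_det_eq_zero hdet
  exact le_antisymm (Nat.le_of_lt_succ hlt) (two_le_rank_of_diag_eq_zero hdiag hsum hsum' hM0)

theorem U3_le_V3 : U3 ≤ V3 := by
  rintro _ ⟨a, b, c, rfl⟩
  change _ ∧ _ ∧ _
  revert a b c
  decide

theorem U3_ne_bot : U3 ≠ ⊥ :=
  U3.ne_bot_iff.2 ⟨_, ⟨1, 0, 0, rfl⟩, by decide⟩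

theorem transposeSpace_U3 : transposeSpace U3 = U3 := by
  have htranspose {M : Matrix (Fin 3) (Fin 3) (ZMod 2)} (hM : M ∈ U3) : Mᵀ ∈ U3 := by
    obtain ⟨a, b, c, rfl⟩ := hM
    exact ⟨a, c, b, by ext i j; fin_cases i <;> fin_cases j <;> rfl⟩
  ext M
  exact mem_transposeSpace.trans ⟨htranspose (M := Mᵀ), htranspose⟩

theorem exists_mem_U3_mulVec_eq_zero {y : Fin 3 → ZMod 2} (hy : y ≠ 0) :
    ∃ M ∈ U3, M ≠ 0 ∧ M *ᵥ y = 0 := by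
  obtain ⟨u, v, w, rfl⟩ : ∃ u v w, y = ![u, v, w] := ⟨y 0, y 1, y 2, by ext i; fin_cases i <;> rfl⟩
  -- The kernel of a nonzero matrix of `U3` is spanned by `(b, 1 + c, 1)` if `a = 1` and by
  -- `(c, b, 0)` if `a = 0`.
  obtain rfl | rfl := (by decide : ∀ t : ZMod 2, t = 0 ∨ t = 1) w
  · refine ⟨_, ⟨0, v, u, rfl⟩, ?_⟩
    revert u v
    decide
  · refine ⟨_, ⟨1, u, 1 + v, rfl⟩, ?_⟩
    revert u v
    decide

theorem avoidsHyperplanes_U3 : AvoidsHyperplanes U3 :=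
  avoidsHyperplanes_of_forall_exists_mulVec_eq_zero
    (fun _ hM => rank_eq_two_of_mem_V3 (U3_le_V3 hM)) fun _ => exists_mem_U3_mulVec_eq_zero

theorem avoidsHyperplanes_transposeSpace_U3 : AvoidsHyperplanes (transposeSpace U3) :=
  transposeSpace_U3.symm ▸ avoidsHyperplanes_U3

theorem U3_and_V3_are_primitive_with_upper_rank_two :
    (Primitive (ZMod 2) U3 ∧ urk U3 = 2) ∧
    (Primitive (ZMod 2) V3 ∧ urk V3 = 2) ∧
    (∀ M ∈ U3, M ≠ 0 → M.rank = 2) ∧ (∀ M ∈ V3, M ≠ 0 → M.rank = 2) := by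
  have hrankU : ∀ M ∈ U3, M ≠ 0 → M.rank = 2 := fun _ hM => rank_eq_two_of_mem_V3 (U3_le_V3 hM)
  have hrankV : ∀ M ∈ V3, M ≠ 0 → M.rank = 2 := fun _ => rank_eq_two_of_mem_V3
  have hurkU : urk U3 = 2 := urk_eq_of_forall_rank_eq U3_ne_bot hrankU
  have hurkV : urk V3 = 2 :=
    urk_eq_of_forall_rank_eq (ne_bot_of_le_ne_bot U3_ne_bot U3_le_V3) hrankV
  have havoidV : AvoidsHyperplanes V3 := avoidsHyperplanes_U3.mono U3_le_V3
  have havoidV' : AvoidsHyperplanes (transposeSpace V3) :=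
    avoidsHyperplanes_transposeSpace_U3.mono (transposeSpace_mono U3_le_V3)
  exact ⟨⟨avoidsHyperplanes_U3.primitive avoidsHyperplanes_transposeSpace_U3 hurkU, hurkU⟩,
    ⟨havoidV.primitive havoidV' hurkV, hurkV⟩, hrankU, hrankV⟩
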